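/- arXiv:math/0701399 — 3 statements merged into one kernel-verified Lean document; each statement's English description precedes it below -/
import Mathlib

section
/- Let F be an associative algebra (not necessarily unital) over a field k of characteristic 0. Then for all k ≥ 1 and ℓ ≥ 1: (a) I_k^ℓ(F) ⊆ I_{k−1}^ℓ(F) and I_k^{≤ℓ}(F) ⊆ I_{k−1}^{≤ℓ}(F); (b) [F, I_{k−1}^ℓ(F)] ⊆ I_k^ℓ(F) and [F, I_{k−1}^{≤ℓ}(F)] ⊆ I_k^{≤ℓ}(F); (c) I_k^{≤ℓ+1}(F) = F·[F, I_{k−1}^{≤ℓ}(F)] + [F, I_{k−1}^{≤ℓ+1}(F)]. -/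
open Submodule TensorProduct

variable (K : Type*) [Field K]

/-- The span of all products `a * b`, `a ∈ S`, `b ∈ T` (the subspace `S·T`). -/
def pSpan {R : Type*} [NonUnitalRing R] [Module K R] (S T : Submodule K R) : Submodule K R :=
  Submodule.span K {x | ∃ a ∈ S, ∃ b ∈ T, x = a * b}

/-- The span of all commutators `a * b - b * a`, `a ∈ S`, `b ∈ T` (the subspace `[S, T]`). -/
def bSpan {R : Type*} [NonUnitalRing R] [Module K R] (S T : Submodule K R) : Submodule K R :=
  Submodule.span K {x | ∃ a ∈ S, ∃ b ∈ T, x = a * b - b * a}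

/-- The `k`-th commutator space `S^(k)`: `S^(0) = S`, `S^(k) = [S, S^(k-1)]`.
For `S = ⊤` this is the commutator space `F^(k)` of the algebra. -/
def cSp {R : Type*} [NonUnitalRing R] [Module K R] (S : Submodule K R) : ℕ → Submodule K R
  | 0 => S
  | (k+1) => bSpan K S (cSp S k)

/-- `IklS K S ℓ k` is `I_k^ℓ(R, S)`: the sum of `S^(λ₁) ⋯ S^(λ_ℓ)` over
`λ₁ + ⋯ + λ_ℓ = k`, defined via the recursion `I_k^1 = S^(k)`,
`I_k^ℓ = Σ_{0 ≤ i ≤ k} S^(i) · I_{k-i}^{ℓ-1}`.  The first argument is the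
superscript `ℓ`, the second the subscript `k`; the (unused) value at `ℓ = 0` is `⊥`.
For `S = ⊤` this is `I_k^ℓ(F)`. -/
def IklS {R : Type*} [NonUnitalRing R] [Module K R] (S : Submodule K R) :
    ℕ → ℕ → Submodule K R
  | 0, _ => ⊥
  | 1, k => cSp K S k
  | (ℓ+2), k => ∑ i ∈ Finset.range (k+1), pSpan K (cSp K S i) (IklS S (ℓ+1) (k-i))

/-- `I_k^{≤ℓ}(F) = Σ_{1 ≤ ℓ' ≤ ℓ} I_k^{ℓ'}(F)`. -/
def Ikle {R : Type*} [NonUnitalRing R] [Module K R] (ℓ k : ℕ) : Submodule K R :=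
  ∑ ℓ' ∈ Finset.Icc 1 ℓ, IklS K (⊤ : Submodule K R) ℓ' k

/-- `I_k(F) = Σ_{ℓ ≥ 1} I_k^ℓ(F)`. -/
def Ik (R : Type*) [NonUnitalRing R] [Module K R] (k : ℕ) : Submodule K R :=
  ⨆ ℓ : ℕ, IklS K (⊤ : Submodule K R) (ℓ + 1) k

/-- `g^n`: the span of all products of `n` elements of `g` (set to `⊥` for `n = 0`). -/
def gPow {R : Type*} [NonUnitalRing R] [Module K R] (g : Submodule K R) : ℕ → Submodule K R
  | 0 => ⊥
  | 1 => g
  | (n+2) => pSpan K g (gPow g (n+1))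

/-- The Lie subalgebra (under the commutator bracket) generated by a subspace `S`:
the smallest subspace containing `S` and closed under `(x, y) ↦ x * y - y * x`. -/
def lieGen {R : Type*} [NonUnitalRing R] [Module K R] (S : Submodule K R) : Submodule K R :=
  sInf {T | S ≤ T ∧ ∀ x ∈ T, ∀ y ∈ T, x * y - y * x ∈ T}

/-- The subspace `S ⊗ T` of `F ⊗[K] A`: the span of all pure tensors `f ⊗ a`
with `f ∈ S`, `a ∈ T`. -/
def tSpan {F A : Type*} [AddCommGroup F] [Module K F] [AddCommGroup A] [Module K A]
    (S : Submodule K F) (T : Submodule K A) : Submodule K (F ⊗[K] A) :=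
  Submodule.span K {z | ∃ f ∈ S, ∃ a ∈ T, z = f ⊗ₜ[K] a}

/-- The current Lie algebra `(g, A)(F)`: the Lie subalgebra of `F ⊗ A` (with the
commutator bracket) generated by `F ⊗ g`. -/
def currentLie {F A : Type*} [NonUnitalRing F] [Module K F] [SMulCommClass K F F]
    [IsScalarTower K F F] [Ring A] [Algebra K A] (g : Submodule K A) :
    Submodule K (F ⊗[K] A) :=
  lieGen K (tSpan K (⊤ : Submodule K F) g)

/-!
Since `[f, ·]` is a derivation, `[F, AB] ⊆ [F, A]B + A[F, B]` and `[F, A]B ⊆ [F, AB] + A[F, B]` for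
all subspaces `A`, `B`. By the second inclusion the commutators can be moved off the first factor of
`F^(i) I_j^ℓ` one at a time, which gives `I_{k+1}^{ℓ+1} = F · I_{k+1}^ℓ + [F, I_k^{ℓ+1}]` and,
summing over `ℓ`, `I_{k+1}^{≤ℓ+1} = F · I_{k+1}^{≤ℓ} + [F, I_k^{≤ℓ+1}]`. As `F · F ⊆ F`, induction
on `ℓ` turns this into `F · I_{k+1}^{≤ℓ} = F · [F, I_k^{≤ℓ}]`, and (c) follows.
-/

theorem sum_submodule_eq_iSup {A M ι : Type*} [Semiring A] [AddCommMonoid M] [Module A M]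
    (s : Finset ι) (p : ι → Submodule A M) : ∑ i ∈ s, p i = ⨆ i ∈ s, p i :=
  s.sup_eq_iSup p

section SpansOfProductsAndCommutators

variable {K} {R : Type*} [NonUnitalRing R] [Module K R] {S A A' B B' C T : Submodule K R}

theorem pSpan_le : pSpan K A B ≤ T ↔ ∀ a ∈ A, ∀ b ∈ B, a * b ∈ T := by
  simp only [pSpan, span_le, Set.subset_def, Set.mem_ofPred_eq, SetLike.mem_coe]
  constructor
  · exact fun h a ha b hb ↦ h _ ⟨a, ha, b, hb, rfl⟩
  · rintro h _ ⟨a, ha, b, hb, rfl⟩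
    exact h a ha b hb

theorem bSpan_le : bSpan K A B ≤ T ↔ ∀ a ∈ A, ∀ b ∈ B, a * b - b * a ∈ T := by
  simp only [bSpan, span_le, Set.subset_def, Set.mem_ofPred_eq, SetLike.mem_coe]
  constructor
  · exact fun h a ha b hb ↦ h _ ⟨a, ha, b, hb, rfl⟩
  · rintro h _ ⟨a, ha, b, hb, rfl⟩
    exact h a ha b hb

theorem mul_mem_pSpan {a b : R} (ha : a ∈ A) (hb : b ∈ B) : a * b ∈ pSpan K A B :=
  pSpan_le.1 le_rfl a ha b hb

theorem mul_sub_mul_mem_bSpan {a b : R} (ha : a ∈ A) (hb : b ∈ B) : a * b - b * a ∈ bSpan K A B :=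
  bSpan_le.1 le_rfl a ha b hb

@[gcongr]
theorem pSpan_mono (hA : A ≤ A') (hB : B ≤ B') : pSpan K A B ≤ pSpan K A' B' :=
  pSpan_le.2 fun _ ha _ hb ↦ mul_mem_pSpan (hA ha) (hB hb)

@[gcongr]
theorem bSpan_mono (hA : A ≤ A') (hB : B ≤ B') : bSpan K A B ≤ bSpan K A' B' :=
  bSpan_le.2 fun _ ha _ hb ↦ mul_sub_mul_mem_bSpan (hA ha) (hB hb)

theorem pSpan_pSpan_right_le [SMulCommClass K R R] :
    pSpan K A (pSpan K B C) ≤ pSpan K (pSpan K A B) C := by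
  refine pSpan_le.2 fun a ha ↦ ?_
  suffices h : pSpan K B C ≤ (pSpan K (pSpan K A B) C).comap (LinearMap.mulLeft K a) from
    fun _ hx ↦ h hx
  refine pSpan_le.2 fun b hb c hc ↦ ?_
  rw [mem_comap, LinearMap.mulLeft_apply, ← mul_assoc]
  exact mul_mem_pSpan (mul_mem_pSpan ha hb) hc

theorem pSpan_bSpan_left_le [IsScalarTower K R R] :
    pSpan K (bSpan K S A) B ≤ bSpan K S (pSpan K A B) ⊔ pSpan K A (bSpan K S B) := by
  suffices h : ∀ b ∈ B, bSpan K S A ≤ (bSpan K S (pSpan K A B) ⊔ pSpan K A (bSpan K S B)).comap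
      (LinearMap.mulRight K b) from pSpan_le.2 fun _ hx b hb ↦ h b hb hx
  refine fun b hb ↦ bSpan_le.2 fun s hs a ha ↦ ?_
  have leibniz : (s * a - a * s) * b = (s * (a * b) - a * b * s) - a * (s * b - b * s) := by
    noncomm_ring
  rw [mem_comap, LinearMap.mulRight_apply, leibniz]
  exact sub_mem (mem_sup_left (mul_sub_mul_mem_bSpan hs (mul_mem_pSpan ha hb)))
    (mem_sup_right (mul_mem_pSpan ha (mul_sub_mul_mem_bSpan hs hb)))

variable [SMulCommClass K R R] [IsScalarTower K R R]

theorem pSpan_eq_map₂ : pSpan K A B = map₂ (LinearMap.mul K R) A B :=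
  le_antisymm (pSpan_le.2 fun _ ha _ hb ↦ apply_mem_map₂ (LinearMap.mul K R) ha hb)
    (map₂_le.2 fun _ ha _ hb ↦ mul_mem_pSpan ha hb)

theorem bSpan_eq_map₂ :
    bSpan K A B = map₂ (LinearMap.mul K R - (LinearMap.mul K R).flip) A B :=
  le_antisymm
    (bSpan_le.2 fun _ ha _ hb ↦
      apply_mem_map₂ (LinearMap.mul K R - (LinearMap.mul K R).flip) ha hb)
    (map₂_le.2 fun _ ha _ hb ↦ mul_sub_mul_mem_bSpan ha hb)

theorem pSpan_bot_right : pSpan K A ⊥ = ⊥ := by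
  rw [pSpan_eq_map₂, map₂_bot_right]

theorem bSpan_bot_right : bSpan K A ⊥ = ⊥ := by
  rw [bSpan_eq_map₂, map₂_bot_right]

theorem pSpan_sup_right : pSpan K A (B ⊔ C) = pSpan K A B ⊔ pSpan K A C := by
  simp only [pSpan_eq_map₂, map₂_sup_right]

theorem bSpan_sup_right : bSpan K A (B ⊔ C) = bSpan K A B ⊔ bSpan K A C := by
  simp only [bSpan_eq_map₂, map₂_sup_right]

theorem bSpan_iSup_right {ι : Sort*} (B : ι → Submodule K R) :
    bSpan K A (⨆ i, B i) = ⨆ i, bSpan K A (B i) := by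
  simp only [bSpan_eq_map₂, map₂_iSup_right]

theorem bSpan_pSpan_le :
    bSpan K S (pSpan K A B) ≤ pSpan K (bSpan K S A) B ⊔ pSpan K A (bSpan K S B) := by
  refine bSpan_le.2 fun s hs ↦ ?_
  suffices h : pSpan K A B ≤ (pSpan K (bSpan K S A) B ⊔ pSpan K A (bSpan K S B)).comap
      (LinearMap.mulLeft K s - LinearMap.mulRight K s) from fun _ hx ↦ h hx
  refine pSpan_le.2 fun a ha b hb ↦ ?_
  have leibniz : s * (a * b) - a * b * s = (s * a - a * s) * b + a * (s * b - b * s) := by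
    noncomm_ring
  rw [mem_comap, LinearMap.sub_apply, LinearMap.mulLeft_apply, LinearMap.mulRight_apply, leibniz]
  exact add_mem_sup (mul_mem_pSpan (mul_sub_mul_mem_bSpan hs ha) hb)
    (mul_mem_pSpan ha (mul_sub_mul_mem_bSpan hs hb))

end SpansOfProductsAndCommutators

section FixedLength

variable {K} {R : Type*} [NonUnitalRing R] [Module K R] {S T : Submodule K R}

theorem cSp_antitone (hS : bSpan K S S ≤ S) : Antitone (cSp K S) := by
  refine antitone_nat_of_succ_le fun k ↦ ?_
  induction k with
  | zero => exact hS
  | succ k ih => exact bSpan_mono le_rfl ih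

theorem IklS_add_two_eq_iSup (ℓ k : ℕ) :
    IklS K S (ℓ + 2) k =
      ⨆ (i) (j) (_ : i + j = k), pSpan K (cSp K S i) (IklS K S (ℓ + 1) j) := by
  rw [IklS, sum_submodule_eq_iSup]
  refine le_antisymm (iSup₂_le fun i hi ↦ ?_) (iSup_le fun i ↦ iSup₂_le fun j hij ↦ ?_)
  · have hik : i + (k - i) = k := Nat.add_sub_of_le (Finset.mem_range_succ_iff.1 hi)
    exact le_iSup_of_le i (le_iSup₂_of_le (k - i) hik le_rfl)
  · obtain rfl : j = k - i := by lia
    exact le_iSup₂_of_le i (Finset.mem_range.2 (by lia)) le_rfl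

theorem IklS_add_two_le {ℓ k : ℕ} :
    IklS K S (ℓ + 2) k ≤ T ↔
      ∀ i j, i + j = k → pSpan K (cSp K S i) (IklS K S (ℓ + 1) j) ≤ T := by
  simp only [IklS_add_two_eq_iSup, iSup_le_iff]

theorem pSpan_cSp_IklS_le {ℓ i j k : ℕ} (hij : i + j = k) :
    pSpan K (cSp K S i) (IklS K S (ℓ + 1) j) ≤ IklS K S (ℓ + 2) k :=
  IklS_add_two_le.1 le_rfl i j hij

theorem IklS_antitone (hS : bSpan K S S ≤ S) : ∀ ℓ, Antitone (IklS K S ℓ)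
  | 0 => antitone_const
  | 1 => cSp_antitone hS
  | ℓ + 2 => by
    refine antitone_nat_of_succ_le fun k ↦ IklS_add_two_le.2 fun i j hij ↦ ?_
    cases i with
    | zero =>
      calc pSpan K (cSp K S 0) (IklS K S (ℓ + 1) j)
          ≤ pSpan K (cSp K S 0) (IklS K S (ℓ + 1) k) :=
            pSpan_mono le_rfl (IklS_antitone hS (ℓ + 1) (by lia))
        _ ≤ IklS K S (ℓ + 2) k := pSpan_cSp_IklS_le (zero_add k)
    | succ i =>
      calc pSpan K (cSp K S (i + 1)) (IklS K S (ℓ + 1) j)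
          ≤ pSpan K (cSp K S i) (IklS K S (ℓ + 1) j) :=
            pSpan_mono (cSp_antitone hS i.le_succ) le_rfl
        _ ≤ IklS K S (ℓ + 2) k := pSpan_cSp_IklS_le (by lia)

variable [SMulCommClass K R R] [IsScalarTower K R R]

theorem bSpan_IklS_le (ℓ k : ℕ) : bSpan K S (IklS K S (ℓ + 1) k) ≤ IklS K S (ℓ + 1) (k + 1) := by
  induction ℓ generalizing k with
  | zero => exact le_rfl
  | succ ℓ ih =>
    simp only [IklS_add_two_eq_iSup ℓ k, bSpan_iSup_right, iSup_le_iff]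
    intro i j hij
    calc bSpan K S (pSpan K (cSp K S i) (IklS K S (ℓ + 1) j))
        ≤ pSpan K (cSp K S (i + 1)) (IklS K S (ℓ + 1) j) ⊔
            pSpan K (cSp K S i) (bSpan K S (IklS K S (ℓ + 1) j)) := bSpan_pSpan_le
      _ ≤ pSpan K (cSp K S (i + 1)) (IklS K S (ℓ + 1) j) ⊔
            pSpan K (cSp K S i) (IklS K S (ℓ + 1) (j + 1)) := by gcongr; exact ih j
      _ ≤ IklS K S (ℓ + 2) (k + 1) :=
        sup_le (pSpan_cSp_IklS_le (by lia)) (pSpan_cSp_IklS_le (by lia))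

theorem pSpan_cSp_IklS_le_sup {ℓ i j k : ℕ} (hij : i + j = k + 1) :
    pSpan K (cSp K S i) (IklS K S (ℓ + 1) j) ≤
      pSpan K S (IklS K S (ℓ + 1) (k + 1)) ⊔ bSpan K S (IklS K S (ℓ + 2) k) := by
  induction i generalizing j with
  | zero =>
    obtain rfl : j = k + 1 := by lia
    exact le_sup_left
  | succ i ih =>
    calc pSpan K (bSpan K S (cSp K S i)) (IklS K S (ℓ + 1) j)
        ≤ bSpan K S (pSpan K (cSp K S i) (IklS K S (ℓ + 1) j)) ⊔
            pSpan K (cSp K S i) (bSpan K S (IklS K S (ℓ + 1) j)) := pSpan_bSpan_left_le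
      _ ≤ bSpan K S (IklS K S (ℓ + 2) k) ⊔ pSpan K (cSp K S i) (IklS K S (ℓ + 1) (j + 1)) := by
        gcongr
        · exact pSpan_cSp_IklS_le (by lia)
        · exact bSpan_IklS_le ℓ j
      _ ≤ pSpan K S (IklS K S (ℓ + 1) (k + 1)) ⊔ bSpan K S (IklS K S (ℓ + 2) k) :=
        sup_le le_sup_right (ih (by lia))

theorem IklS_add_two_succ (ℓ k : ℕ) :
    IklS K S (ℓ + 2) (k + 1) =
      pSpan K S (IklS K S (ℓ + 1) (k + 1)) ⊔ bSpan K S (IklS K S (ℓ + 2) k) :=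
  le_antisymm (IklS_add_two_le.2 fun _ _ ↦ pSpan_cSp_IklS_le_sup)
    (sup_le (pSpan_cSp_IklS_le (i := 0) (zero_add _)) (bSpan_IklS_le (ℓ + 1) k))

end FixedLength

section BoundedLength

variable {K} {F : Type*} [NonUnitalRing F] [Module K F]

theorem Ikle_zero (k : ℕ) : Ikle K (R := F) 0 k = ⊥ := by
  simp [Ikle]

theorem Ikle_succ (ℓ k : ℕ) :
    Ikle K (R := F) (ℓ + 1) k = Ikle K (R := F) ℓ k ⊔ IklS K (⊤ : Submodule K F) (ℓ + 1) k :=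
  Finset.sum_Icc_succ_top (Nat.le_add_left 1 ℓ) _

theorem Ikle_antitone (ℓ : ℕ) : Antitone (Ikle K (R := F) ℓ) := fun _ _ hk ↦
  Finset.sum_le_sum fun ℓ' _ ↦ IklS_antitone le_top ℓ' hk

variable [SMulCommClass K F F] [IsScalarTower K F F]

theorem Ikle_succ_succ (ℓ k : ℕ) :
    Ikle K (R := F) (ℓ + 1) (k + 1) =
      pSpan K ⊤ (Ikle K (R := F) ℓ (k + 1)) ⊔ bSpan K ⊤ (Ikle K (R := F) (ℓ + 1) k) := by
  induction ℓ with
  | zero =>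
    simp only [Ikle_succ, Ikle_zero, pSpan_bot_right, bot_sup_eq]
    rfl
  | succ ℓ ih =>
    calc Ikle K (R := F) (ℓ + 2) (k + 1)
        = (pSpan K ⊤ (Ikle K ℓ (k + 1)) ⊔ bSpan K ⊤ (Ikle K (ℓ + 1) k)) ⊔
            (pSpan K ⊤ (IklS K ⊤ (ℓ + 1) (k + 1)) ⊔ bSpan K ⊤ (IklS K ⊤ (ℓ + 2) k)) := by
          rw [Ikle_succ, ih, IklS_add_two_succ]
      _ = pSpan K ⊤ (Ikle K (ℓ + 1) (k + 1)) ⊔ bSpan K ⊤ (Ikle K (ℓ + 2) k) := by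
          rw [sup_sup_sup_comm, ← pSpan_sup_right, ← bSpan_sup_right, ← Ikle_succ, ← Ikle_succ]

theorem bSpan_Ikle_le (ℓ k : ℕ) :
    bSpan K ⊤ (Ikle K (R := F) ℓ k) ≤ Ikle K (R := F) ℓ (k + 1) := by
  cases ℓ with
  | zero => rw [Ikle_zero, Ikle_zero, bSpan_bot_right]
  | succ ℓ => exact le_sup_right.trans (Ikle_succ_succ ℓ k).ge

theorem pSpan_top_Ikle_succ (ℓ k : ℕ) :
    pSpan K ⊤ (Ikle K (R := F) ℓ (k + 1)) = pSpan K ⊤ (bSpan K ⊤ (Ikle K (R := F) ℓ k)) := by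
  refine le_antisymm ?_ (pSpan_mono le_rfl (bSpan_Ikle_le ℓ k))
  induction ℓ with
  | zero => simp only [Ikle_zero, pSpan_bot_right, bot_le]
  | succ ℓ ih =>
    rw [Ikle_succ_succ, pSpan_sup_right]
    refine sup_le ?_ le_rfl
    calc pSpan K ⊤ (pSpan K ⊤ (Ikle K (R := F) ℓ (k + 1)))
        ≤ pSpan K ⊤ (pSpan K ⊤ (bSpan K ⊤ (Ikle K (R := F) ℓ k))) := pSpan_mono le_rfl ih
      _ ≤ pSpan K (pSpan K ⊤ ⊤) (bSpan K ⊤ (Ikle K (R := F) ℓ k)) := pSpan_pSpan_right_le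
      _ ≤ pSpan K ⊤ (bSpan K ⊤ (Ikle K (R := F) (ℓ + 1) k)) := by
        gcongr
        · exact le_top
        · exact le_sup_left.trans (Ikle_succ ℓ k).ge

end BoundedLength

theorem statement0_general {K : Type*} [Field K]
    {F : Type*} [NonUnitalRing F] [Module K F] [SMulCommClass K F F] [IsScalarTower K F F]
    (k ℓ : ℕ) (hk : 1 ≤ k) (hℓ : 1 ≤ ℓ) :
    IklS K (⊤ : Submodule K F) ℓ k ≤ IklS K (⊤ : Submodule K F) ℓ (k - 1) ∧
    Ikle K (R := F) ℓ k ≤ Ikle K (R := F) ℓ (k - 1) ∧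
    bSpan K ⊤ (IklS K (⊤ : Submodule K F) ℓ (k - 1)) ≤ IklS K (⊤ : Submodule K F) ℓ k ∧
    bSpan K ⊤ (Ikle K (R := F) ℓ (k - 1)) ≤ Ikle K (R := F) ℓ k ∧
    Ikle K (R := F) (ℓ + 1) k =
      pSpan K ⊤ (bSpan K ⊤ (Ikle K (R := F) ℓ (k - 1))) ⊔
        bSpan K ⊤ (Ikle K (R := F) (ℓ + 1) (k - 1)) := by
  obtain ⟨k, rfl⟩ := Nat.exists_eq_add_of_le' hk
  obtain ⟨ℓ, rfl⟩ := Nat.exists_eq_add_of_le' hℓ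
  rw [Nat.add_sub_cancel]
  refine ⟨IklS_antitone le_top _ k.le_succ, Ikle_antitone _ k.le_succ, bSpan_IklS_le ℓ k,
    bSpan_Ikle_le _ k, ?_⟩
  rw [Ikle_succ_succ, pSpan_top_Ikle_succ]

/-- basic properties of the subspaces `I_k^ℓ(F)` and `I_k^{≤ℓ}(F)`. -/
theorem statement0 {K : Type*} [Field K] [CharZero K]
    {F : Type*} [NonUnitalRing F] [Module K F] [SMulCommClass K F F] [IsScalarTower K F F]
    (k ℓ : ℕ) (hk : 1 ≤ k) (hℓ : 1 ≤ ℓ) :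
    IklS K (⊤ : Submodule K F) ℓ k ≤ IklS K (⊤ : Submodule K F) ℓ (k - 1) ∧
    Ikle K (R := F) ℓ k ≤ Ikle K (R := F) ℓ (k - 1) ∧
    bSpan K ⊤ (IklS K (⊤ : Submodule K F) ℓ (k - 1)) ≤ IklS K (⊤ : Submodule K F) ℓ k ∧
    bSpan K ⊤ (Ikle K (R := F) ℓ (k - 1)) ≤ Ikle K (R := F) ℓ k ∧
    Ikle K (R := F) (ℓ + 1) k =
      pSpan K ⊤ (bSpan K ⊤ (Ikle K (R := F) ℓ (k - 1))) ⊔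
        bSpan K ⊤ (Ikle K (R := F) (ℓ + 1) (k - 1)) :=
  statement0_general k ℓ hk hℓ
end

section
/- Let (g,A) be a compatible pair over a field k of characteristic 0. For m ≥ 2, let ğ^m denote the k-linear span of all m-th powers g^m with g ∈ g. Then for every m ≥ 2 one has ğ^m + (g^{m−1} ∩ g^m) = g^m. -/
open Submodule TensorProduct

variable (K : Type*) [Field K]

/-!
Write a product of `m` elements of `g` as an ordered word. Exchanging two adjacent letters changes
it by a word with one letter fewer, since `[g, g] ⊆ g`; hence modulo `g^{m-1} ∩ g^m` the word is
invariant under all permutations `σ` of its letters, and `m!` times the word is congruent to the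
sum of its permuted versions. By polarization this sum is an integral combination of `m`-th powers
of sums of the letters, and `m!` is invertible.
-/

section Polarization

open Finset

variable {ι N : Type*} [Fintype ι] [DecidableEq ι]

theorem sum_surjective_eq_sum_perm [AddCommMonoid N] (F : (ι → ι) → N) :
    ∑ φ with Function.Surjective φ, F φ = ∑ σ : Equiv.Perm ι, F σ := by
  symm
  refine sum_nbij (fun σ ↦ σ) (fun σ _ ↦ mem_filter_univ _ |>.mpr (Equiv.surjective σ))
    DFunLike.coe_injective.injOn (fun φ hφ ↦ ?_) (fun _ _ ↦ rfl)
  have hφ_bij : Function.Bijective φ := Finite.surjective_iff_bijective.mp (by simpa using hφ)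
  exact ⟨Equiv.ofBijective φ hφ_bij, by simp, rfl⟩

variable {R M : Type*} [CommSemiring R] [AddCommMonoid M] [Module R M] [AddCommGroup N] [Module R N]

-- Inclusion-exclusion over the values omitted by a map `ι → ι` singles out the permutations.
theorem sum_perm_multilinearMap_comp (f : MultilinearMap R (fun _ : ι ↦ M) N) (x : ι → M) :
    ∑ σ : Equiv.Perm ι, f (x ∘ σ) =
      ∑ s : Finset ι, (-1 : ℤ) ^ #s • f (fun _ ↦ ∑ i ∈ sᶜ, x i) := by
  let omitting (i : ι) : Finset (ι → ι) := {φ | ∀ j, φ j ≠ i}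
  have inf_compl_omitting : univ.inf (fun i ↦ (omitting i)ᶜ) =
      ({φ | Function.Surjective φ} : Finset (ι → ι)) := by
    ext φ
    rw [mem_filter_univ]
    simp [omitting, Finset.mem_inf, Function.Surjective]
  have inf_omitting (s : Finset ι) : s.inf omitting = Fintype.piFinset fun _ ↦ sᶜ := by
    ext φ
    simp only [omitting, Finset.mem_inf, mem_filter_univ, Fintype.mem_piFinset, mem_compl]
    grind
  calc
    ∑ σ : Equiv.Perm ι, f (x ∘ σ) = ∑ φ ∈ univ.inf (fun i ↦ (omitting i)ᶜ), f (x ∘ φ) := by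
      rw [inf_compl_omitting, sum_surjective_eq_sum_perm (fun φ ↦ f (x ∘ φ))]
    _ = ∑ s : Finset ι, (-1 : ℤ) ^ #s • ∑ φ ∈ s.inf omitting, f (x ∘ φ) := by
      rw [inclusion_exclusion_sum_inf_compl, powerset_univ]
    _ = ∑ s : Finset ι, (-1 : ℤ) ^ #s • f (fun _ ↦ ∑ i ∈ sᶜ, x i) := by
      refine sum_congr rfl fun s _ ↦ ?_
      rw [inf_omitting, f.map_sum_finset (fun _ ↦ x)]
      rfl

end Polarization

theorem list_prod_mem_pow_length {R A : Type*} [CommSemiring R] [Semiring A] [Algebra R A]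
    {g : Submodule R A} {l : List A} (hl : ∀ x ∈ l, x ∈ g) : l.prod ∈ g ^ l.length := by
  induction l with
  | nil => exact one_le.mp le_rfl
  | cons a l ih =>
    rw [List.forall_mem_cons] at hl
    rw [List.prod_cons, List.length_cons, pow_succ']
    exact mul_mem_mul hl.1 (ih hl.2)

section Words

variable {R A : Type*} [CommRing R] [Ring A] [Algebra R A] {g : Submodule R A}

theorem list_prod_sub_prod_mem_pow_pred_of_perm (hg : ∀ x ∈ g, ∀ y ∈ g, x * y - y * x ∈ g)
    {l₁ l₂ : List A} (hperm : l₁.Perm l₂) (hl₁ : ∀ x ∈ l₁, x ∈ g) :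
    l₁.prod - l₂.prod ∈ g ^ (l₁.length - 1) := by
  induction hperm with
  | nil => simp
  | @cons a l₁ l₂ hperm ih =>
    rw [List.forall_mem_cons] at hl₁
    rcases l₁ with _ | ⟨b, l₁⟩
    · simp [hperm.nil_eq.symm]
    · rw [List.prod_cons, List.prod_cons (l := l₂), ← mul_sub]
      simpa [pow_succ'] using mul_mem_mul hl₁.1 (ih hl₁.2)
  | swap a b l =>
    simp only [List.forall_mem_cons] at hl₁
    obtain ⟨hb, ha, hl⟩ := hl₁
    have hswap : (b :: a :: l).prod - (a :: b :: l).prod = (b * a - a * b) * l.prod := by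
      simp only [List.prod_cons, sub_mul, mul_assoc]
    rw [hswap]
    simpa [pow_succ'] using mul_mem_mul (hg b hb a ha) (list_prod_mem_pow_length hl)
  | trans h₁₂ _ ih₁₂ ih₂₃ =>
    have h₂₃ := ih₂₃ fun x hx ↦ hl₁ x (h₁₂.mem_iff.mpr hx)
    rw [← h₁₂.length_eq] at h₂₃
    simpa only [sub_add_sub_cancel] using add_mem (ih₁₂ hl₁) h₂₃

variable {m : ℕ} {x : Fin m → A}

theorem ofFn_prod_mem_pow (hx : ∀ i, x i ∈ g) : (List.ofFn x).prod ∈ g ^ m := by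
  simpa only [List.length_ofFn] using list_prod_mem_pow_length (List.forall_mem_ofFn_iff.mpr hx)

theorem ofFn_prod_sub_ofFn_comp_perm_prod_mem (hg : ∀ x ∈ g, ∀ y ∈ g, x * y - y * x ∈ g)
    (hx : ∀ i, x i ∈ g) (σ : Equiv.Perm (Fin m)) :
    (List.ofFn x).prod - (List.ofFn (x ∘ σ)).prod ∈ g ^ (m - 1) ⊓ g ^ m := by
  refine mem_inf.mpr ⟨?_, sub_mem (ofFn_prod_mem_pow hx) (ofFn_prod_mem_pow fun i ↦ hx (σ i))⟩
  simpa only [List.length_ofFn] using list_prod_sub_prod_mem_pow_pred_of_perm hg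
    (σ.ofFn_comp_perm x).symm (List.forall_mem_ofFn_iff.mpr hx)

theorem sum_perm_ofFn_prod_mem_span_pow (hx : ∀ i, x i ∈ g) :
    ∑ σ : Equiv.Perm (Fin m), (List.ofFn (x ∘ σ)).prod ∈ span R {y | ∃ z ∈ g, y = z ^ m} := by
  have polarization := sum_perm_multilinearMap_comp (MultilinearMap.mkPiAlgebraFin R m A) x
  simp only [MultilinearMap.mkPiAlgebraFin_apply, List.ofFn_const, List.prod_replicate]
    at polarization
  rw [polarization]
  refine sum_mem fun s _ ↦ zsmul_mem (subset_span ?_) _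
  exact ⟨_, sum_mem fun i _ ↦ hx i, rfl⟩

theorem factorial_smul_ofFn_prod_mem (hg : ∀ x ∈ g, ∀ y ∈ g, x * y - y * x ∈ g)
    (hx : ∀ i, x i ∈ g) :
    (m.factorial : R) • (List.ofFn x).prod ∈
      span R {y | ∃ z ∈ g, y = z ^ m} ⊔ (g ^ (m - 1) ⊓ g ^ m) := by
  have symmetrize : (m.factorial : R) • (List.ofFn x).prod =
      ∑ σ : Equiv.Perm (Fin m), (List.ofFn (x ∘ σ)).prod +
        ∑ σ : Equiv.Perm (Fin m), ((List.ofFn x).prod - (List.ofFn (x ∘ σ)).prod) := by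
    rw [← Finset.sum_add_distrib]
    simp [Fintype.card_perm, Nat.cast_smul_eq_nsmul]
  rw [symmetrize]
  exact add_mem_sup (sum_perm_ofFn_prod_mem_span_pow hx)
    (sum_mem fun σ _ ↦ ofFn_prod_sub_ofFn_comp_perm_prod_mem hg hx σ)

end Words

section GPow

variable {K : Type*} [Field K] {A : Type*} [Ring A] [Algebra K A]

theorem pSpan_eq_mul (S T : Submodule K A) : pSpan K S T = S * T := by
  rw [mul_eq_span_mul_set, pSpan]
  congr 1
  ext x
  simp only [Set.mem_ofPred_eq, Set.mem_mul, SetLike.mem_coe, eq_comm]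

theorem gPow_eq_pow (g : Submodule K A) : ∀ {n : ℕ}, n ≠ 0 → gPow K g n = g ^ n
  | 1, _ => (pow_one g).symm
  | n + 2, _ => by rw [gPow, gPow_eq_pow g n.succ_ne_zero, pSpan_eq_mul, ← pow_succ']

end GPow

theorem statement2_general {R A : Type*} [CommRing R] [Ring A] [Algebra R A]
    (g : Submodule R A) (hg : ∀ x ∈ g, ∀ y ∈ g, x * y - y * x ∈ g)
    (m : ℕ) (hm : IsUnit (m.factorial : R)) :
    span R {y : A | ∃ x ∈ g, y = x ^ m} ⊔ (g ^ (m - 1) ⊓ g ^ m) = g ^ m := by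
  apply le_antisymm
  · refine sup_le (span_le.mpr ?_) inf_le_right
    rintro _ ⟨x, hx, rfl⟩
    exact pow_mem_pow g hx m
  · refine (pow_eq_span_pow_set g m).trans_le (span_le.mpr fun y hy ↦ ?_)
    obtain ⟨x, rfl⟩ := Set.mem_pow.mp hy
    exact (smul_mem_iff_of_isUnit _ hm).mp (factorial_smul_ofFn_prod_mem hg fun i ↦ (x i).2)

/-- for a compatible pair `(g, A)` and `m ≥ 2`, the span of `m`-th powers
of elements of `g`, together with `g^{m-1} ∩ g^m`, is all of `g^m`. -/
theorem statement2 {K : Type*} [Field K] [CharZero K]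
    {A : Type*} [Ring A] [Algebra K A]
    (g : Submodule K A) (hg : ∀ x ∈ g, ∀ y ∈ g, x * y - y * x ∈ g)
    (m : ℕ) (hm : 2 ≤ m) :
    Submodule.span K {y : A | ∃ x ∈ g, y = x ^ m} ⊔ (gPow K g (m - 1) ⊓ gPow K g m) =
      gPow K g m := by
  rw [gPow_eq_pow g (by lia : m - 1 ≠ 0), gPow_eq_pow g (by lia : m ≠ 0)]
  exact statement2_general g hg m (Nat.cast_ne_zero.mpr m.factorial_ne_zero).isUnit
end

section
/- Let V be a finite-dimensional vector space over a field k of characteristic 0 with dim V > 1, and let sl(V) ⊆ End(V) be the subspace of traceless endomorphisms. Then the compatible pair (sl(V), End(V)) is of type 2 (i.e. sl(V) ≠ End(V) and sl(V) + sl(V)² = End(V)), and for every associative k-algebra F one has (sl(V), End(V))(F) = [F,F] ⊗ 1 + F ⊗ sl(V); equivalently, (sl(V), End(V))(F) is the set of all X ∈ F ⊗ End(V) whose trace lies in [F,F], where Tr : F ⊗ End(V) → F is the F-linear extension of the ordinary trace End(V) → k. -/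
open Submodule TensorProduct

variable (K : Type*) [Field K]

/-!
The argument works for any algebra `A` with a functional `τ` satisfying `τ (a * b) = τ (b * a)`, in
the role of `End(V)` with its trace. The extension `F ⊗ A → F` of `τ` sends commutators into
`[F, F]`, so it sends all of `(ker τ, A)(F)` there. Conversely, let `a, b ∈ ker τ` with
`τ (a * b) ≠ 0`. Then
`[p ⊗ a, q ⊗ b] = [p, q] ⊗ a * b + q * p ⊗ [a, b]`
and `[a, b] ∈ ker τ`, so `(ker τ, A)(F)` contains `[F, F] ⊗ a * b`. Since `A` is spanned by
`a * b` and `ker τ`, everything of trace in `[F, F]` lies in `[F, F] ⊗ a * b + F ⊗ ker τ`.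
For `End(V)` the matrix units `e_ij`, `e_ji` serve as `a`, `b`.
-/

section LieGen

variable {K} {R : Type*} [NonUnitalRing R] [Module K R] {S T : Submodule K R}

theorem le_lieGen : S ≤ lieGen K S :=
  le_sInf fun _ hT => hT.1

theorem commutator_mem_lieGen {x y : R} (hx : x ∈ lieGen K S) (hy : y ∈ lieGen K S) :
    x * y - y * x ∈ lieGen K S :=
  mem_sInf.2 fun T hT => hT.2 x (mem_sInf.1 hx T hT) y (mem_sInf.1 hy T hT)

theorem lieGen_le (hST : S ≤ T) (hT : ∀ x ∈ T, ∀ y ∈ T, x * y - y * x ∈ T) : lieGen K S ≤ T :=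
  sInf_le ⟨hST, hT⟩

theorem commutator_mem_bSpan {x y : R} (hx : x ∈ S) (hy : y ∈ T) :
    x * y - y * x ∈ bSpan K S T :=
  subset_span ⟨x, hx, y, hy, rfl⟩

end LieGen

section TensorSpan

variable {K} {F A : Type*} [AddCommGroup F] [Module K F] [AddCommGroup A] [Module K A]

theorem tmul_mem_tSpan {S : Submodule K F} {T : Submodule K A} {f : F} {a : A}
    (hf : f ∈ S) (ha : a ∈ T) : f ⊗ₜ[K] a ∈ tSpan K S T :=
  subset_span ⟨f, hf, a, ha, rfl⟩

theorem tSpan_le {S : Submodule K F} {T : Submodule K A} {P : Submodule K (F ⊗[K] A)} :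
    tSpan K S T ≤ P ↔ ∀ f ∈ S, ∀ a ∈ T, f ⊗ₜ[K] a ∈ P := by
  refine ⟨fun h f hf a ha => h (tmul_mem_tSpan hf ha), fun h => span_le.2 ?_⟩
  rintro _ ⟨f, hf, a, ha, rfl⟩
  exact h f hf a ha

variable (F) in
/-- The extension `F ⊗ A → F`, `f ⊗ a ↦ τ(a) f`, of a functional `τ : A → K`. For `τ` the trace of
`End(V)` this is the `F`-linear trace `Tr : F ⊗ End(V) → F`. -/
def traceExt (τ : A →ₗ[K] K) : F ⊗[K] A →ₗ[K] F :=
  (TensorProduct.rid K F).toLinearMap ∘ₗ LinearMap.lTensor F τ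

@[simp]
theorem traceExt_tmul (τ : A →ₗ[K] K) (f : F) (a : A) : traceExt F τ (f ⊗ₜ[K] a) = τ a • f := by
  simp [traceExt]

theorem sub_traceExt_tmul_mem_tSpan {τ : A →ₗ[K] K} {e : A} (he : τ e = 1) (X : F ⊗[K] A) :
    X - traceExt F τ X ⊗ₜ[K] e ∈ tSpan K ⊤ (LinearMap.ker τ) := by
  induction X using TensorProduct.induction_on with
  | zero => simp
  | add X Y hX hY =>
    rw [map_add, add_tmul, add_sub_add_comm]
    exact add_mem hX hY
  | tmul f a =>
    rw [traceExt_tmul, smul_tmul, ← tmul_sub]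
    exact tmul_mem_tSpan mem_top (by simp [he])

theorem comap_traceExt {τ : A →ₗ[K] K} {e : A} (he : τ e ≠ 0) (P : Submodule K F) :
    P.comap (traceExt F τ) = tSpan K P (span K {e}) ⊔ tSpan K ⊤ (LinearMap.ker τ) := by
  apply le_antisymm
  · intro X hX
    have normalized : τ ((τ e)⁻¹ • e) = 1 := by simp [he]
    rw [← add_sub_cancel (traceExt F τ X ⊗ₜ[K] ((τ e)⁻¹ • e)) X]
    exact add_mem_sup (tmul_mem_tSpan hX (smul_mem _ _ (mem_span_singleton_self e)))
      (sub_traceExt_tmul_mem_tSpan normalized X)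
  · refine sup_le (tSpan_le.2 fun f hf a _ => ?_) (tSpan_le.2 fun f _ a ha => ?_)
    · simpa using P.smul_mem (τ a) hf
    · simp [LinearMap.mem_ker.1 ha]

end TensorSpan

section Tracial

variable {K} {F : Type*} [NonUnitalRing F] [Module K F] [SMulCommClass K F F]
  [IsScalarTower K F F] {A : Type*} [Ring A] [Algebra K A] {τ : A →ₗ[K] K}

theorem traceExt_commutator_mem_bSpan (hτ : ∀ a b, τ (a * b) = τ (b * a)) (X Y : F ⊗[K] A) :
    traceExt F τ (X * Y - Y * X) ∈ bSpan K (⊤ : Submodule K F) ⊤ := by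
  induction X using TensorProduct.induction_on with
  | zero => simp
  | add X X' hX hX' =>
    rw [add_mul, mul_add, add_sub_add_comm, map_add]
    exact add_mem hX hX'
  | tmul p a =>
    induction Y using TensorProduct.induction_on with
    | zero => simp
    | add Y Y' hY hY' =>
      rw [add_mul, mul_add, add_sub_add_comm, map_add]
      exact add_mem hY hY'
    | tmul q b =>
      have trace_eq : traceExt F τ (p ⊗ₜ[K] a * q ⊗ₜ[K] b - q ⊗ₜ[K] b * p ⊗ₜ[K] a) =
          τ (a * b) • (p * q - q * p) := by
        simp [hτ b a, smul_sub]
      rw [trace_eq]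
      exact smul_mem _ _ (commutator_mem_bSpan mem_top mem_top)

theorem tmul_mem_currentLie {g : Submodule K A} {a : A} (f : F) (ha : a ∈ g) :
    f ⊗ₜ[K] a ∈ currentLie K (F := F) g :=
  le_lieGen (tmul_mem_tSpan mem_top ha)

theorem commutator_tmul_mul_mem_currentLie {g : Submodule K A} {a b : A} (ha : a ∈ g) (hb : b ∈ g)
    (hab : a * b - b * a ∈ g) (p q : F) :
    (p * q - q * p) ⊗ₜ[K] (a * b) ∈ currentLie K (F := F) g := by
  have expand : (p * q - q * p) ⊗ₜ[K] (a * b) =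
      (p ⊗ₜ[K] a * q ⊗ₜ[K] b - q ⊗ₜ[K] b * p ⊗ₜ[K] a) - (q * p) ⊗ₜ[K] (a * b - b * a) := by
    simp only [Algebra.TensorProduct.tmul_mul_tmul, sub_tmul, tmul_sub]
    abel
  rw [expand]
  exact sub_mem
    (commutator_mem_lieGen (tmul_mem_currentLie p ha) (tmul_mem_currentLie q hb))
    (tmul_mem_currentLie _ hab)

theorem tSpan_bSpan_mul_le_currentLie {g : Submodule K A} {a b : A} (ha : a ∈ g) (hb : b ∈ g)
    (hab : a * b - b * a ∈ g) :
    tSpan K (bSpan K (⊤ : Submodule K F) ⊤) (span K {a * b}) ≤ currentLie K g := by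
  refine tSpan_le.2 fun f hf c hc => ?_
  obtain ⟨r, rfl⟩ := mem_span_singleton.1 hc
  rw [tmul_smul]
  refine smul_mem _ r ?_
  suffices bSpan K ⊤ ⊤ ≤ (currentLie K g).comap ((TensorProduct.mk K F A).flip (a * b)) from this hf
  refine span_le.2 ?_
  rintro _ ⟨p, -, q, -, rfl⟩
  exact commutator_tmul_mul_mem_currentLie ha hb hab p q

theorem currentLie_ker_eq_comap_traceExt (hτ : ∀ a b, τ (a * b) = τ (b * a)) {a b : A}
    (ha : τ a = 0) (hb : τ b = 0) (hab : τ (a * b) ≠ 0) :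
    currentLie K (F := F) (LinearMap.ker τ) = (bSpan K ⊤ ⊤).comap (traceExt F τ) := by
  apply le_antisymm
  · refine lieGen_le ?_ fun X _ Y _ => traceExt_commutator_mem_bSpan hτ X Y
    rw [comap_traceExt hab]
    exact le_sup_right
  · rw [comap_traceExt hab]
    exact sup_le (tSpan_bSpan_mul_le_currentLie ha hb (by simp [hτ a b])) le_lieGen

theorem ker_sup_pSpan_ker_eq_top {a b : A} (ha : τ a = 0) (hb : τ b = 0) (hab : τ (a * b) ≠ 0) :
    LinearMap.ker τ ⊔ pSpan K (LinearMap.ker τ) (LinearMap.ker τ) = ⊤ := by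
  have mul_mem : a * b ∈ pSpan K (LinearMap.ker τ) (LinearMap.ker τ) :=
    subset_span ⟨a, ha, b, hb, rfl⟩
  rw [eq_top_iff, ← τ.span_singleton_sup_ker_eq_top hab, sup_comm]
  exact sup_le_sup_left ((span_singleton_le_iff_mem _ _).2 mul_mem) _

theorem statement7_general (hτ : ∀ a b, τ (a * b) = τ (b * a)) (hone : τ 1 ≠ 0) {a b : A}
    (ha : τ a = 0) (hb : τ b = 0) (hab : τ (a * b) ≠ 0) :
    (LinearMap.ker τ ≠ ⊤ ∧
      LinearMap.ker τ ⊔ pSpan K (LinearMap.ker τ) (LinearMap.ker τ) = ⊤) ∧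
    currentLie K (F := F) (LinearMap.ker τ) =
      tSpan K (bSpan K ⊤ ⊤) (span K {1}) ⊔ tSpan K ⊤ (LinearMap.ker τ) ∧
    ∀ X : F ⊗[K] A,
      X ∈ currentLie K (LinearMap.ker τ) ↔ traceExt F τ X ∈ bSpan K (⊤ : Submodule K F) ⊤ := by
  have currentLie_eq := currentLie_ker_eq_comap_traceExt (F := F) hτ ha hb hab
  refine ⟨⟨fun ker_eq_top => hone ?_, ker_sup_pSpan_ker_eq_top ha hb hab⟩,
    currentLie_eq.trans (comap_traceExt hone _), fun X => by rw [currentLie_eq, mem_comap]⟩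
  rw [LinearMap.ker_eq_top.1 ker_eq_top, LinearMap.zero_apply]

end Tracial

theorem exists_trace_eq_zero_and_trace_mul_eq_one {R M : Type*} [CommRing R] [Nontrivial R]
    [AddCommGroup M] [Module R M] [Module.Free R M] [Module.Finite R M]
    (hM : 1 < Module.finrank R M) :
    ∃ a b : Module.End R M, LinearMap.trace R M a = 0 ∧ LinearMap.trace R M b = 0 ∧
      LinearMap.trace R M (a * b) = 1 := by
  let v := Module.finBasis R M
  have : Nontrivial (Fin (Module.finrank R M)) := Fin.nontrivial_iff_two_le.2 hM
  obtain ⟨i, j, hij⟩ := exists_pair_ne (Fin (Module.finrank R M))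
  have mul_eq : (v.coord j).smulRight (v i) * (v.coord i).smulRight (v j) =
      (v.coord i).smulRight (v i) := by
    ext x
    simp
  refine ⟨(v.coord j).smulRight (v i), (v.coord i).smulRight (v j), ?_, ?_, ?_⟩
  · simp [LinearMap.trace_smulRight, hij]
  · simp [LinearMap.trace_smulRight, hij.symm]
  · simp [mul_eq, LinearMap.trace_smulRight]

/-- the pair `(sl(V), End(V))` is of type 2, and
`(sl(V), End(V))(F) = [F,F] ⊗ 1 + F ⊗ sl(V)`; equivalently, `(sl(V), End(V))(F)`
consists of the `X ∈ F ⊗ End(V)` whose trace lies in `[F,F]`. -/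
theorem statement7 {K : Type*} [Field K] [CharZero K]
    {F : Type*} [NonUnitalRing F] [Module K F] [SMulCommClass K F F] [IsScalarTower K F F]
    {V : Type*} [AddCommGroup V] [Module K V] [FiniteDimensional K V]
    (hdim : 1 < Module.finrank K V) :
    (LinearMap.ker (LinearMap.trace K V) ≠ (⊤ : Submodule K (Module.End K V)) ∧
      LinearMap.ker (LinearMap.trace K V) ⊔
        pSpan K (LinearMap.ker (LinearMap.trace K V)) (LinearMap.ker (LinearMap.trace K V)) =
          (⊤ : Submodule K (Module.End K V))) ∧
    currentLie K (F := F) (LinearMap.ker (LinearMap.trace K V)) =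
      tSpan K (bSpan K (⊤ : Submodule K F) ⊤)
          (Submodule.span K {(1 : Module.End K V)}) ⊔
        tSpan K (⊤ : Submodule K F) (LinearMap.ker (LinearMap.trace K V)) ∧
    ∀ X : F ⊗[K] Module.End K V,
      X ∈ currentLie K (F := F) (LinearMap.ker (LinearMap.trace K V)) ↔
        ((TensorProduct.rid K F).toLinearMap ∘ₗ
            LinearMap.lTensor F (LinearMap.trace K V)) X ∈
          bSpan K (⊤ : Submodule K F) ⊤ := by
  have hone : LinearMap.trace K V 1 ≠ 0 := by
    rw [LinearMap.trace_one]
    exact_mod_cast (zero_lt_one.trans hdim).ne'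
  obtain ⟨a, b, ha, hb, hab⟩ := exists_trace_eq_zero_and_trace_mul_eq_one hdim
  exact statement7_general (LinearMap.trace_mul_comm K) hone ha hb (hab.trans_ne one_ne_zero)
end
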